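/- Let L be a residuated lattice, E_L the disjoint union over P ∈ Spec(L) of the quotients L/O(P), equipped with the topology T(B) generated by the base B = {D(F, a) : F a filter of L, a ∈ L}, where D(F, a) = {a_P : P ∈ D(F)}, and let π : E_L → Spec(L) be the canonical projection a_P ↦ P. Equip E_L △ E_L = {(u, v) ∈ E_L × E_L : π(u) = π(v)} with the subspace topology of the product topology. Then the function E_L △ E_L → E_L sending (a_P, b_P) to (a ⊗ b)_P is well defined and continuous, and the same holds for the operations induced by ∧, ∨ and →. -/

import Mathlib

/-- A residuated lattice: a bounded lattice with a commutative monoid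
operation `mul` whose identity is the top element, and a residuum `himp`
satisfying `mul x y ≤ z ↔ x ≤ himp y z`. Here `⊤` plays the role of `1`
and `⊥` the role of `0`. -/
class ResiduatedLattice (L : Type*) extends Lattice L, BoundedOrder L where
  mul : L → L → L
  himp : L → L → L
  mul_comm : ∀ x y : L, mul x y = mul y x
  mul_assoc : ∀ x y z : L, mul (mul x y) z = mul x (mul y z)
  mul_top : ∀ x : L, mul x ⊤ = x
  residuation : ∀ x y z : L, mul x y ≤ z ↔ x ≤ himp y z

namespace ResiduatedLattice

variable {L : Type*} [ResiduatedLattice L]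

/-- A filter of a residuated lattice: a nonempty, upward closed subset
closed under `mul`. -/
def IsFilter (F : Set L) : Prop :=
  F.Nonempty ∧ (∀ x y : L, x ∈ F → x ≤ y → y ∈ F) ∧
    ∀ x y : L, x ∈ F → y ∈ F → mul x y ∈ F

/-- A prime filter: a proper filter such that `x ⊔ y ∈ P` implies
`x ∈ P` or `y ∈ P`. -/
def IsPrimeFilter (P : Set L) : Prop :=
  IsFilter P ∧ P ≠ Set.univ ∧ ∀ x y : L, x ⊔ y ∈ P → x ∈ P ∨ y ∈ P

/-- `filterGen X` is the smallest filter containing `X`. -/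
def filterGen (X : Set L) : Set L := ⋂₀ {F : Set L | IsFilter F ∧ X ⊆ F}

/-- The prime spectrum: the set of all prime filters. -/
def Spectrum (L : Type*) [ResiduatedLattice L] := {P : Set L // IsPrimeFilter P}

/-- `D X = {P ∈ Spec L | X ⊄ P}`. -/
def D (X : Set L) : Set (Spectrum L) := {P : Spectrum L | ¬ X ⊆ P.1}

/-- `O P = {x | a ⊔ x = 1 for some a ∉ P}`. -/
def O (P : Set L) : Set L := {x : L | ∃ a ∉ P, a ⊔ x = ⊤}

/-- The congruence relation associated to a filter `F`:
`x ≡_F y` iff `(x → y) ⊗ (y → x) ∈ F`. -/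
def rel (F : Set L) (x y : L) : Prop := mul (himp x y) (himp y x) ∈ F

end ResiduatedLattice

namespace ResiduatedLattice

variable {L : Type*} [ResiduatedLattice L]

/-- The family of sets of the form `D X`, the open sets of the Stone topology. -/
def stoneOpens (L : Type*) [ResiduatedLattice L] : Set (Set (Spectrum L)) :=
  {U : Set (Spectrum L) | ∃ X : Set L, U = D X}

/-- The Stone topology on `Spec(L)`, whose open sets are exactly the `D X`. -/
instance : TopologicalSpace (Spectrum L) :=
  TopologicalSpace.generateFrom (stoneOpens L)

/-- The total space `E_L`: the disjoint union over `P ∈ Spec(L)` of the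
quotients `L/O(P)` (quotient by the relation `x ≡ y` iff
`(x → y) ⊗ (y → x) ∈ O(P)`). -/
def EL (L : Type*) [ResiduatedLattice L] :=
  (P : Spectrum L) × Quot (rel (O P.1))

/-- `a_P`, the class of `a` in the stalk `L/O(P)`, viewed in `E_L`. -/
def stalkMk (P : Spectrum L) (a : L) : EL L := ⟨P, Quot.mk _ a⟩

/-- The canonical projection `π : E_L → Spec(L)`, `a_P ↦ P`. -/
def proj (L : Type*) [ResiduatedLattice L] : EL L → Spectrum L := fun e => e.1

/-- `D(F, a) = {a_P : P ∈ D(F)}`. -/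
def DFa (F : Set L) (a : L) : Set (EL L) :=
  {e : EL L | ∃ P ∈ D F, e = stalkMk P a}

/-- The base `B = {D(F, a) : F a filter of L, a ∈ L}` for the topology on `E_L`. -/
def ELBase (L : Type*) [ResiduatedLattice L] : Set (Set (EL L)) :=
  {S : Set (EL L) | ∃ (F : Set L) (a : L), IsFilter F ∧ S = DFa F a}

/-- The topology `T(B)` on `E_L` generated by the base `B`. -/
instance : TopologicalSpace (EL L) :=
  TopologicalSpace.generateFrom (ELBase L)

end ResiduatedLattice

namespace ResiduatedLattice

/-- `E_L △ E_L = {(u, v) ∈ E_L × E_L : π(u) = π(v)}` with the subspace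
topology of the product topology. -/
abbrev EDelta (L : Type*) [ResiduatedLattice L] :=
  {uv : EL L × EL L // proj L uv.1 = proj L uv.2}

/-!
The set where two sections `P ↦ a_P` and `P ↦ b_P` agree is open, since `x ∈ O(P)` says exactly
that `P ∈ D {c | c ⊔ x = ⊤}`. Hence every section `P ↦ a_P` is an open embedding, and so is every
`P ↦ (a_P, b_P)` into `E_L △ E_L`. These embeddings cover `E_L △ E_L`, and an operation on stalks
induced by `op` pulls back along each of them to the section `P ↦ (op a b)_P`, so it is continuous.
It is well defined because `⊗`, `∧`, `∨` and `→` respect the congruence of every filter.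
-/

section Arithmetic

variable {L : Type*} [ResiduatedLattice L]

instance : Std.Commutative (mul : L → L → L) := ⟨mul_comm⟩

instance : Std.Associative (mul : L → L → L) := ⟨mul_assoc⟩

theorem himp_mul_le (x y : L) : mul (himp x y) x ≤ y :=
  (residuation _ _ _).2 le_rfl

theorem sup_mul (x y z : L) : mul (x ⊔ y) z = mul x z ⊔ mul y z :=
  eq_of_forall_ge_iff fun w => by simp only [residuation, sup_le_iff]

theorem mul_sup (x y z : L) : mul x (y ⊔ z) = mul x y ⊔ mul x z := by
  simp only [mul_comm x, sup_mul]

theorem mul_mono_left {x y : L} (h : x ≤ y) (z : L) : mul x z ≤ mul y z :=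
  (residuation _ _ _).2 (h.trans ((residuation _ _ _).1 le_rfl))

theorem mul_mono {x y z w : L} (hxy : x ≤ y) (hzw : z ≤ w) : mul x z ≤ mul y w := calc
  mul x z ≤ mul y z := mul_mono_left hxy z
  _ = mul z y := mul_comm y z
  _ ≤ mul w y := mul_mono_left hzw y
  _ = mul y w := mul_comm w y

theorem mul_le_left (x y : L) : mul x y ≤ x :=
  (mul_mono le_rfl le_top).trans_eq (mul_top x)

theorem mul_le_right (x y : L) : mul x y ≤ y :=
  (mul_comm x y).trans_le (mul_le_left y x)

theorem sup_mul_sup_le (a b x y : L) : mul (a ⊔ x) (b ⊔ y) ≤ a ⊔ b ⊔ mul x y := calc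
  mul (a ⊔ x) (b ⊔ y) = mul a (b ⊔ y) ⊔ (mul x b ⊔ mul x y) := by rw [sup_mul, mul_sup x]
  _ ≤ a ⊔ (b ⊔ mul x y) :=
    sup_le_sup (mul_le_left _ _) (sup_le_sup_right (mul_le_right _ _) _)
  _ = a ⊔ b ⊔ mul x y := (sup_assoc _ _ _).symm

theorem himp_mul_himp_le_himp (x y z : L) : mul (himp x y) (himp y z) ≤ himp x z :=
  (residuation _ _ _).1 <| calc
    mul (mul (himp x y) (himp y z)) x = mul (himp y z) (mul (himp x y) x) := by ac_rfl
    _ ≤ mul (himp y z) y := mul_mono le_rfl (himp_mul_le x y)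
    _ ≤ z := himp_mul_le y z

theorem himp_mul_himp_le_himp_mul (x y x' y' : L) :
    mul (himp x y) (himp x' y') ≤ himp (mul x x') (mul y y') :=
  (residuation _ _ _).1 <| calc
    mul (mul (himp x y) (himp x' y')) (mul x x')
      = mul (mul (himp x y) x) (mul (himp x' y') x') := by ac_rfl
    _ ≤ mul y y' := mul_mono (himp_mul_le x y) (himp_mul_le x' y')

theorem himp_mul_himp_le_himp_inf (x y x' y' : L) :
    mul (himp x y) (himp x' y') ≤ himp (x ⊓ x') (y ⊓ y') :=
  (residuation _ _ _).1 <| le_inf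
    ((mul_mono (mul_le_left _ _) inf_le_left).trans (himp_mul_le x y))
    ((mul_mono (mul_le_right _ _) inf_le_right).trans (himp_mul_le x' y'))

theorem himp_mul_himp_le_himp_sup (x y x' y' : L) :
    mul (himp x y) (himp x' y') ≤ himp (x ⊔ x') (y ⊔ y') :=
  (residuation _ _ _).1 <| (mul_sup _ x x').trans_le <| sup_le_sup
    ((mul_mono_left (mul_le_left _ _) x).trans (himp_mul_le x y))
    ((mul_mono_left (mul_le_right _ _) x').trans (himp_mul_le x' y'))

theorem himp_mul_himp_le_himp_himp (x y x' y' : L) :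
    mul (himp y x) (himp x' y') ≤ himp (himp x x') (himp y y') :=
  (residuation _ _ _).1 <| calc
    mul (mul (himp y x) (himp x' y')) (himp x x')
      = mul (mul (himp y x) (himp x x')) (himp x' y') := by ac_rfl
    _ ≤ mul (himp y x') (himp x' y') := mul_mono_left (himp_mul_himp_le_himp y x x') _
    _ ≤ himp y y' := himp_mul_himp_le_himp y x' y'

end Arithmetic

section Filters

variable {L : Type*} [ResiduatedLattice L] {F P X : Set L}

theorem IsFilter.mem_of_le (hF : IsFilter F) {x y : L} (hx : x ∈ F) (hxy : x ≤ y) : y ∈ F :=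
  hF.2.1 x y hx hxy

theorem IsFilter.mul_mem (hF : IsFilter F) {x y : L} (hx : x ∈ F) (hy : y ∈ F) : mul x y ∈ F :=
  hF.2.2 x y hx hy

theorem IsFilter.top_mem (hF : IsFilter F) : ⊤ ∈ F :=
  let ⟨_, hx⟩ := hF.1
  hF.mem_of_le hx le_top

theorem isFilter_univ : IsFilter (Set.univ : Set L) :=
  ⟨⟨⊤, trivial⟩, fun _ _ _ _ => trivial, fun _ _ _ _ => trivial⟩

theorem isFilter_filterGen (X : Set L) : IsFilter (filterGen X) :=
  ⟨⟨⊤, fun _ hF => hF.1.top_mem⟩, fun _ _ hx hxy F hF => hF.1.mem_of_le (hx F hF) hxy,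
    fun _ _ hx hy F hF => hF.1.mul_mem (hx F hF) (hy F hF)⟩

theorem filterGen_subset_iff (hF : IsFilter F) : filterGen X ⊆ F ↔ X ⊆ F :=
  ⟨fun h _ hx => h fun _ hG => hG.2 hx, fun h _ hx => hx F ⟨hF, h⟩⟩

theorem IsPrimeFilter.isFilter_O (hP : IsPrimeFilter P) : IsFilter (O P) := by
  obtain ⟨-, hproper, hprime⟩ := hP
  refine ⟨?_, ?_, ?_⟩
  · obtain ⟨a, ha⟩ := (Set.ne_univ_iff_exists_notMem P).1 hproper
    exact ⟨⊤, a, ha, sup_top_eq a⟩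
  · rintro x y ⟨a, ha, hax⟩ hxy
    exact ⟨a, ha, top_le_iff.1 (hax.ge.trans (sup_le_sup_left hxy a))⟩
  · rintro x y ⟨a, ha, hax⟩ ⟨b, hb, hby⟩
    refine ⟨a ⊔ b, fun hab => (hprime a b hab).elim ha hb, top_le_iff.1 ?_⟩
    calc ⊤ = mul (a ⊔ x) (b ⊔ y) := by rw [hax, hby, mul_top]
      _ ≤ a ⊔ b ⊔ mul x y := sup_mul_sup_le a b x y

theorem IsFilter.rel_iff (hF : IsFilter F) {x y : L} :
    rel F x y ↔ himp x y ∈ F ∧ himp y x ∈ F :=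
  ⟨fun h => ⟨hF.mem_of_le h (mul_le_left _ _), hF.mem_of_le h (mul_le_right _ _)⟩,
    fun h => hF.mul_mem h.1 h.2⟩

theorem IsFilter.himp_mem_trans (hF : IsFilter F) {x y z : L} (hxy : himp x y ∈ F)
    (hyz : himp y z ∈ F) : himp x z ∈ F :=
  hF.mem_of_le (hF.mul_mem hxy hyz) (himp_mul_himp_le_himp x y z)

theorem IsFilter.rel_equivalence (hF : IsFilter F) : Equivalence (rel F) where
  refl x :=
    have hxx : himp x x ∈ F := hF.mem_of_le hF.top_mem ((residuation _ _ _).1 (mul_le_right _ _))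
    hF.rel_iff.2 ⟨hxx, hxx⟩
  symm h := hF.rel_iff.2 (hF.rel_iff.1 h).symm
  trans hxy hyz :=
    have ⟨hxy, hyx⟩ := hF.rel_iff.1 hxy
    have ⟨hyz, hzy⟩ := hF.rel_iff.1 hyz
    hF.rel_iff.2 ⟨hF.himp_mem_trans hxy hyz, hF.himp_mem_trans hzy hyx⟩

/-- A binary operation respects filters if it is compatible with the congruence `rel F` of every
filter `F`, so that it induces an operation on every quotient `L/F`. -/
def RespectsFilters (op : L → L → L) : Prop :=
  ∀ ⦃F : Set L⦄, IsFilter F → ∀ ⦃x y x' y' : L⦄,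
    rel F x y → rel F x' y' → rel F (op x x') (op y y')

theorem RespectsFilters.of_himp_mul_himp_le {op : L → L → L}
    (h : ∀ x y x' y', mul (himp x y) (himp x' y') ≤ himp (op x x') (op y y')) :
    RespectsFilters op := fun _ hF _ _ _ _ hr hr' =>
  have ⟨hxy, hyx⟩ := hF.rel_iff.1 hr
  have ⟨hxy', hyx'⟩ := hF.rel_iff.1 hr'
  hF.rel_iff.2 ⟨hF.mem_of_le (hF.mul_mem hxy hxy') (h _ _ _ _),
    hF.mem_of_le (hF.mul_mem hyx hyx') (h _ _ _ _)⟩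

theorem respectsFilters_mul : RespectsFilters (mul : L → L → L) :=
  .of_himp_mul_himp_le himp_mul_himp_le_himp_mul

theorem respectsFilters_inf : RespectsFilters ((· ⊓ ·) : L → L → L) :=
  .of_himp_mul_himp_le himp_mul_himp_le_himp_inf

theorem respectsFilters_sup : RespectsFilters ((· ⊔ ·) : L → L → L) :=
  .of_himp_mul_himp_le himp_mul_himp_le_himp_sup

theorem respectsFilters_himp : RespectsFilters (himp : L → L → L) := fun _ hF _ _ _ _ hr hr' =>
  have ⟨hxy, hyx⟩ := hF.rel_iff.1 hr
  have ⟨hxy', hyx'⟩ := hF.rel_iff.1 hr'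
  hF.rel_iff.2 ⟨hF.mem_of_le (hF.mul_mem hyx hxy') (himp_mul_himp_le_himp_himp _ _ _ _),
    hF.mem_of_le (hF.mul_mem hxy hyx') (himp_mul_himp_le_himp_himp _ _ _ _)⟩

end Filters

section Sections

open Topology

variable {L : Type*} [ResiduatedLattice L]

theorem isOpen_D (X : Set L) : IsOpen (D X) :=
  TopologicalSpace.isOpen_generateFrom_of_mem ⟨X, rfl⟩

theorem D_filterGen (X : Set L) : D (filterGen X) = D X :=
  Set.ext fun P => not_congr (filterGen_subset_iff P.2.1)

theorem D_univ : D (Set.univ : Set L) = Set.univ :=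
  Set.eq_univ_of_forall fun P h => P.2.2.1 (Set.univ_subset_iff.1 h)

theorem isOpen_setOf_mem_O (x : L) : IsOpen {P : Spectrum L | x ∈ O P.1} := by
  have h : {P : Spectrum L | x ∈ O P.1} = D {c | c ⊔ x = ⊤} := by
    ext P
    simp only [O, D, Set.mem_ofPred_eq, Set.not_subset, and_comm]
  exact h ▸ isOpen_D _

theorem stalkMk_eq_iff {P : Spectrum L} {a b : L} :
    stalkMk P a = stalkMk P b ↔ rel (O P.1) a b :=
  sigma_mk_injective.eq_iff.trans (P.2.isFilter_O.rel_equivalence.quot_mk_eq_iff a b)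

theorem isOpen_setOf_stalkMk_eq (a b : L) :
    IsOpen {P : Spectrum L | stalkMk P a = stalkMk P b} := by
  simp only [stalkMk_eq_iff]
  exact isOpen_setOf_mem_O _

theorem isOpen_DFa {F : Set L} (hF : IsFilter F) (a : L) : IsOpen (DFa F a) :=
  TopologicalSpace.isOpen_generateFrom_of_mem ⟨F, a, hF, rfl⟩

theorem stalkMk_mem_DFa_iff {F : Set L} {P : Spectrum L} {a b : L} :
    stalkMk P a ∈ DFa F b ↔ P ∈ D F ∧ stalkMk P a = stalkMk P b := by
  refine ⟨?_, fun h => ⟨P, h⟩⟩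
  rintro ⟨Q, hQ, hPQ⟩
  obtain rfl : P = Q := congrArg (proj L) hPQ
  exact ⟨hQ, hPQ⟩

theorem continuous_stalkMk (a : L) : Continuous fun P : Spectrum L => stalkMk P a := by
  refine continuous_generateFrom_iff.2 ?_
  rintro _ ⟨F, b, -, rfl⟩
  simp only [Set.preimage, stalkMk_mem_DFa_iff]
  exact (isOpen_D F).inter (isOpen_setOf_stalkMk_eq a b)

theorem exists_stalkMk_eq (u : EL L) : ∃ P a, stalkMk P a = u :=
  let ⟨P, q⟩ := u
  let ⟨a, ha⟩ := Quot.exists_rep q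
  ⟨P, a, congrArg (Sigma.mk P) ha⟩

theorem preimage_proj_D (X : Set L) : proj L ⁻¹' D X = ⋃ a, DFa (filterGen X) a := by
  ext u
  obtain ⟨P, a, rfl⟩ := exists_stalkMk_eq u
  simp only [Set.mem_iUnion, stalkMk_mem_DFa_iff, D_filterGen]
  exact ⟨fun hP => ⟨a, hP, rfl⟩, fun ⟨_, hP, _⟩ => hP⟩

theorem continuous_proj : Continuous (proj L) := by
  refine continuous_generateFrom_iff.2 ?_
  rintro _ ⟨X, rfl⟩
  rw [preimage_proj_D]
  exact isOpen_iUnion (isOpen_DFa (isFilter_filterGen X))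

theorem isOpen_range_stalkMk (a : L) : IsOpen (Set.range fun P : Spectrum L => stalkMk P a) := by
  have h : (Set.range fun P : Spectrum L => stalkMk P a) = DFa Set.univ a := by
    ext u
    simp only [DFa, D_univ, Set.mem_range, Set.mem_univ, true_and, Set.mem_ofPred_eq, eq_comm]
  exact h ▸ isOpen_DFa isFilter_univ a

/-- The section `P ↦ (a_P, b_P)` of `E_L △ E_L → Spec(L)`. -/
def stalkPair (a b : L) (P : Spectrum L) : EDelta L :=
  ⟨(stalkMk P a, stalkMk P b), rfl⟩

theorem exists_stalkPair_eq (w : EDelta L) : ∃ a b P, stalkPair a b P = w := by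
  obtain ⟨⟨u, v⟩, huv⟩ := w
  obtain ⟨P, a, rfl⟩ := exists_stalkMk_eq u
  obtain ⟨Q, b, rfl⟩ := exists_stalkMk_eq v
  obtain rfl : P = Q := huv
  exact ⟨a, b, P, rfl⟩

theorem range_stalkPair (a b : L) :
    Set.range (stalkPair a b) = Subtype.val ⁻¹'
      ((Set.range fun P : Spectrum L => stalkMk P a) ×ˢ
        Set.range fun P : Spectrum L => stalkMk P b) := by
  ext ⟨⟨u, v⟩, huv⟩
  constructor
  · rintro ⟨P, hP⟩
    cases hP
    exact ⟨⟨P, rfl⟩, ⟨P, rfl⟩⟩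
  · rintro ⟨⟨P, rfl : stalkMk P a = u⟩, ⟨Q, rfl : stalkMk Q b = v⟩⟩
    obtain rfl : P = Q := huv
    exact ⟨P, rfl⟩

theorem isOpenEmbedding_stalkPair (a b : L) : IsOpenEmbedding (stalkPair a b) where
  toIsEmbedding :=
    Function.LeftInverse.isEmbedding (f := fun w : EDelta L => proj L w.1.1) (fun _ => rfl)
      (continuous_proj.comp (continuous_fst.comp continuous_subtype_val))
      (((continuous_stalkMk a).prodMk (continuous_stalkMk b)).subtype_mk _)
  isOpen_range := by
    rw [range_stalkPair]
    exact ((isOpen_range_stalkMk a).prod (isOpen_range_stalkMk b)).preimage continuous_subtype_val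

end Sections

section StalkOperations

variable {L : Type*} [ResiduatedLattice L] {op : L → L → L}

/-- The operation `(a_P, b_P) ↦ (op a b)_P` induced on stalks. The second component is transported
along the equality of base points, since the stalks are distinct types. -/
def stalkOp (hop : RespectsFilters op) : EDelta L → EL L
  | ⟨(⟨P, u⟩, ⟨_, v⟩), (hPQ : P = _)⟩ =>
    have hO := P.2.isFilter_O
    ⟨P, Quot.map₂ op (fun a _ _ h => hop hO (hO.rel_equivalence.refl a) h)
      (fun _ _ b h => hop hO h (hO.rel_equivalence.refl b)) u (hPQ ▸ v)⟩

theorem stalkOp_stalkPair (hop : RespectsFilters op) (a b : L) (P : Spectrum L) :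
    stalkOp hop (stalkPair a b P) = stalkMk P (op a b) :=
  rfl

theorem continuous_stalkOp (hop : RespectsFilters op) : Continuous (stalkOp hop) := by
  refine continuous_iff_continuousAt.2 fun w => ?_
  obtain ⟨a, b, P, rfl⟩ := exists_stalkPair_eq w
  exact (isOpenEmbedding_stalkPair a b).continuousAt_iff.1
    (continuous_stalkMk (op a b)).continuousAt

theorem exists_continuous_stalk_op (hop : RespectsFilters op) :
    ∃ f : EDelta L → EL L, Continuous f ∧
      ∀ (P : Spectrum L) (a b : L),
        f ⟨(stalkMk P a, stalkMk P b), rfl⟩ = stalkMk P (op a b) :=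
  ⟨stalkOp hop, continuous_stalkOp hop, fun P a b => stalkOp_stalkPair hop a b P⟩

end StalkOperations

/-- the maps `(a_P, b_P) ↦ (a ⊗ b)_P`, `(a_P, b_P) ↦ (a ∧ b)_P`,
`(a_P, b_P) ↦ (a ∨ b)_P` and `(a_P, b_P) ↦ (a → b)_P` are well defined and
continuous from `E_L △ E_L` to `E_L`. -/
theorem stalk_ops_continuous (L : Type*) [ResiduatedLattice L] :
    (∃ f : EDelta L → EL L, Continuous f ∧
        ∀ (P : Spectrum L) (a b : L),
          f ⟨(stalkMk P a, stalkMk P b), rfl⟩ = stalkMk P (mul a b)) ∧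
      (∃ f : EDelta L → EL L, Continuous f ∧
        ∀ (P : Spectrum L) (a b : L),
          f ⟨(stalkMk P a, stalkMk P b), rfl⟩ = stalkMk P (a ⊓ b)) ∧
      (∃ f : EDelta L → EL L, Continuous f ∧
        ∀ (P : Spectrum L) (a b : L),
          f ⟨(stalkMk P a, stalkMk P b), rfl⟩ = stalkMk P (a ⊔ b)) ∧
      (∃ f : EDelta L → EL L, Continuous f ∧
        ∀ (P : Spectrum L) (a b : L),
          f ⟨(stalkMk P a, stalkMk P b), rfl⟩ = stalkMk P (himp a b)) :=
  ⟨exists_continuous_stalk_op respectsFilters_mul, exists_continuous_stalk_op respectsFilters_inf,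
    exists_continuous_stalk_op respectsFilters_sup, exists_continuous_stalk_op respectsFilters_himp⟩

end ResiduatedLattice
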